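/- Let f be in the real disc algebra A_ℝ(D) and suppose there exists a sequence of real numbers x_n converging to 0 with x_n not in the image f(D̄) of the closed unit disc under f. Then for every g ∈ A_ℝ(D) such that (f,g) is an invertible pair and g has constant sign on the real zeros of f, there exist units u and v of A_ℝ(D) with uf + vg = 1. -/

import Mathlib

open Complex Metric ComplexConjugate

/-- The real disc algebra `A_ℝ(D)`: functions continuous on the closed unit disc,
holomorphic on the open unit disc, satisfying `f z = conj (f (conj z))` on the closed disc. -/
def IsRDisc (f : ℂ → ℂ) : Prop :=
  ContinuousOn f (closedBall (0 : ℂ) 1) ∧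
  DifferentiableOn ℂ f (ball (0 : ℂ) 1) ∧
  ∀ z ∈ closedBall (0 : ℂ) 1, f z = conj (f (conj z))

/-- A unit of `A_ℝ(D)`: a member of the algebra with no zeros on the closed unit disc. -/
def IsRDiscUnit (f : ℂ → ℂ) : Prop :=
  IsRDisc f ∧ ∀ z ∈ closedBall (0 : ℂ) 1, f z ≠ 0

/-- The pair `(f, g)` is invertible in `A_ℝ(D)`: there are `α, β` in the algebra with
`α f + β g = 1` on the closed unit disc. -/
def BezoutPair (f g : ℂ → ℂ) : Prop :=
  ∃ α β : ℂ → ℂ, IsRDisc α ∧ IsRDisc β ∧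
    ∀ z ∈ closedBall (0 : ℂ) 1, α z * f z + β z * g z = 1

/-- The pairs `(f₁,g₁)` and `(f₂,g₂)` are sign-linked. -/
def SignLinked (f₁ g₁ f₂ g₂ : ℂ → ℂ) : Prop :=
  ∀ x y : ℝ, x ∈ Set.Icc (-1 : ℝ) 1 → y ∈ Set.Icc (-1 : ℝ) 1 →
    f₁ (x : ℂ) * g₂ (x : ℂ) - f₂ (x : ℂ) * g₁ (x : ℂ) = 0 →
    f₁ (y : ℂ) * g₂ (y : ℂ) - f₂ (y : ℂ) * g₁ (y : ℂ) = 0 →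
    ∀ lam mu : ℝ,
      f₂ (x : ℂ) = (lam : ℂ) * f₁ (x : ℂ) → g₂ (x : ℂ) = (lam : ℂ) * g₁ (x : ℂ) →
      f₂ (y : ℂ) = (mu : ℂ) * f₁ (y : ℂ) → g₂ (y : ℂ) = (mu : ℂ) * g₁ (y : ℂ) →
      0 < lam * mu

/-- `f` has constant sign on the real zeros of `g`: the (real) values `f x` over
`x ∈ [-1,1]` with `g x = 0` are either all positive or all negative. -/
def ConstSignOnRealZeros (f g : ℂ → ℂ) : Prop :=
  (∀ x ∈ Set.Icc (-1 : ℝ) 1, g (x : ℂ) = 0 → 0 < (f (x : ℂ)).re) ∨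
  (∀ x ∈ Set.Icc (-1 : ℝ) 1, g (x : ℂ) = 0 → (f (x : ℂ)).re < 0)

lemma mem_cb_conj {z : ℂ} (hz : z ∈ closedBall (0 : ℂ) 1) : conj z ∈ closedBall (0 : ℂ) 1 := by
  simpa using hz

lemma IsRDisc.add {f g : ℂ → ℂ} (hf : IsRDisc f) (hg : IsRDisc g) :
    IsRDisc (fun z => f z + g z) :=
  ⟨hf.1.add hg.1, hf.2.1.add hg.2.1, fun z hz => by
    rw [map_add, ← hf.2.2 z hz, ← hg.2.2 z hz]⟩

lemma IsRDisc.sub {f g : ℂ → ℂ} (hf : IsRDisc f) (hg : IsRDisc g) :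
    IsRDisc (fun z => f z - g z) :=
  ⟨hf.1.sub hg.1, hf.2.1.sub hg.2.1, fun z hz => by
    rw [map_sub, ← hf.2.2 z hz, ← hg.2.2 z hz]⟩

lemma IsRDisc.mul {f g : ℂ → ℂ} (hf : IsRDisc f) (hg : IsRDisc g) :
    IsRDisc (fun z => f z * g z) :=
  ⟨hf.1.mul hg.1, hf.2.1.mul hg.2.1, fun z hz => by
    rw [map_mul, ← hf.2.2 z hz, ← hg.2.2 z hz]⟩

lemma IsRDisc.div {f g : ℂ → ℂ} (hf : IsRDisc f) (hg : IsRDiscUnit g) :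
    IsRDisc (fun z => f z / g z) :=
  ⟨hf.1.div hg.1.1 hg.2, hf.2.1.div hg.1.2.1 (fun z hz => hg.2 z (ball_subset_closedBall hz)),
    fun z hz => by rw [map_div₀, ← hf.2.2 z hz, ← hg.1.2.2 z hz]⟩

lemma isRDisc_const (a : ℝ) : IsRDisc (fun _ => (a : ℂ)) :=
  ⟨continuousOn_const, differentiableOn_const _, fun z _ => by simp⟩

lemma isRDisc_one : IsRDisc (fun _ => (1 : ℂ)) := by simpa using isRDisc_const 1

lemma isRDisc_poly (p : Polynomial ℝ) : IsRDisc (fun z => Polynomial.aeval z p) :=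
  ⟨p.continuous_aeval.continuousOn, p.differentiable_aeval.differentiableOn,
    fun z _ => by simp only [Polynomial.aeval_conj, Complex.conj_conj]⟩

lemma isRDisc_id : IsRDisc (fun z => z) := by simpa using isRDisc_poly Polynomial.X

lemma isRDisc_lin (a : ℝ) : IsRDisc (fun z => z - (a : ℂ)) := isRDisc_id.sub (isRDisc_const a)

lemma isRDisc_quad (c : ℂ) : IsRDisc (fun z => (z - c) * (z - conj c)) :=
  ⟨by fun_prop, by fun_prop, fun z _ => by simp; ring⟩

lemma IsRDiscUnit.mul {f g : ℂ → ℂ} (hf : IsRDiscUnit f) (hg : IsRDiscUnit g) :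
    IsRDiscUnit (fun z => f z * g z) :=
  ⟨hf.1.mul hg.1, fun z hz => mul_ne_zero (hf.2 z hz) (hg.2 z hz)⟩

lemma IsRDiscUnit.div {f g : ℂ → ℂ} (hf : IsRDiscUnit f) (hg : IsRDiscUnit g) :
    IsRDiscUnit (fun z => f z / g z) :=
  ⟨hf.1.div hg, fun z hz => div_ne_zero (hf.2 z hz) (hg.2 z hz)⟩

lemma IsRDisc.bound {f : ℂ → ℂ} (hf : IsRDisc f) :
    ∃ C > 0, ∀ z ∈ closedBall (0 : ℂ) 1, ‖f z‖ ≤ C := by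
  obtain ⟨C, hC⟩ := (isCompact_closedBall (0 : ℂ) 1).exists_bound_of_continuousOn hf.1
  exact ⟨max C 1, by positivity, fun z hz => (hC z hz).trans (le_max_left _ _)⟩

/-- `g` is congruent to a unit modulo `f`. -/
def RR (f g : ℂ → ℂ) : Prop :=
  ∃ w k : ℂ → ℂ, IsRDiscUnit w ∧ IsRDisc k ∧
    ∀ z ∈ closedBall (0 : ℂ) 1, g z + k z * f z = w z

lemma RR.of_unit {f g : ℂ → ℂ} (hg : IsRDiscUnit g) : RR f g :=
  ⟨g, fun _ => ((0 : ℝ) : ℂ), hg, isRDisc_const 0, by simp⟩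

lemma RR.mul {f a b : ℂ → ℂ} (hf : IsRDisc f) (hb : IsRDisc b) (h1 : RR f a) (h2 : RR f b) :
    RR f (fun z => a z * b z) := by
  obtain ⟨w, k, hw, hk, h⟩ := h1
  obtain ⟨w', k', hw', hk', h'⟩ := h2
  refine ⟨_, fun z => (w z * k' z + k z * b z), hw.mul hw', (hw.1.mul hk').add (hk.mul hb), ?_⟩
  intro z hz
  simp only
  linear_combination w z * h' z hz + b z * h z hz

lemma RR.cancel {f a b : ℂ → ℂ} (hb : IsRDisc b) (h1 : RR f a)
    (h2 : RR f (fun z => a z * b z)) : RR f b := by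
  obtain ⟨w, k, hw, hk, h⟩ := h1
  obtain ⟨w', k', hw', hk', h'⟩ := h2
  refine ⟨_, fun z => (k' z - k z * b z) / w z, hw'.div hw, (hk'.sub (hk.mul hb)).div hw, ?_⟩
  intro z hz
  have := hw.2 z hz
  field_simp
  have e1 := h z hz
  have e2 := h' z hz
  simp only at e2
  linear_combination e2 - b z * e1

lemma unit_one_add {e : ℂ → ℂ} (he : IsRDisc e) (h : ∀ z ∈ closedBall (0 : ℂ) 1, ‖e z‖ < 1) :
    IsRDiscUnit (fun z => 1 + e z) :=
  ⟨isRDisc_one.add he, fun z hz h0 => by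
    have := h z hz
    rw [eq_neg_of_add_eq_zero_right h0] at this
    simp at this⟩

lemma RR.local {f g : ℂ → ℂ} (hg : IsRDisc g) (h : BezoutPair f g) :
    ∃ ε > 0, ∀ g' : ℂ → ℂ, IsRDisc g' →
      (∀ z ∈ closedBall (0 : ℂ) 1, ‖g' z - g z‖ < ε) → (RR f g' ↔ RR f g) := by
  obtain ⟨α, β, hα, hβ, hab⟩ := h
  obtain ⟨C, hC, hb⟩ := hβ.bound
  refine ⟨1 / C, by positivity, fun g' hg' hd => ?_⟩
  have hu : IsRDiscUnit (fun z => 1 + β z * (g' z - g z)) := by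
    refine unit_one_add (hβ.mul (hg'.sub hg)) fun z hz => ?_
    rw [norm_mul]
    calc ‖β z‖ * ‖g' z - g z‖ ≤ C * ‖g' z - g z‖ := by gcongr; exact hb z hz
      _ < C * (1 / C) := by gcongr; exact hd z hz
      _ = 1 := by field_simp
  constructor
  · rintro ⟨w, k, hw, hk, h⟩
    refine ⟨_, fun z => (k z + α z * (g' z - g z)) / (1 + β z * (g' z - g z)), hw.div hu,
      (hk.add (hα.mul (hg'.sub hg))).div hu, fun z hz => ?_⟩
    have h0 := hu.2 z hz
    simp only at h0 ⊢
    rw [div_mul_eq_mul_div, eq_div_iff h0, add_mul, div_mul_cancel₀ _ h0]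
    linear_combination h z hz + (g' z - g z) * hab z hz
  · rintro ⟨w, k, hw, hk, h⟩
    refine ⟨_, fun z => (k z * (1 + β z * (g' z - g z)) - α z * (g' z - g z)), hw.mul hu,
      (hk.mul hu.1).sub (hα.mul (hg'.sub hg)), fun z hz => ?_⟩
    simp only
    linear_combination (1 + β z * (g' z - g z)) * h z hz - (g' z - g z) * hab z hz

lemma BezoutPair.perturb {f g : ℂ → ℂ} (hg : IsRDisc g) (h : BezoutPair f g) :
    ∃ ε > 0, ∀ g' : ℂ → ℂ, IsRDisc g' →
      (∀ z ∈ closedBall (0 : ℂ) 1, ‖g' z - g z‖ < ε) → ∀ z ∈ closedBall (0 : ℂ) 1, g' z = 0 →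
        f z ≠ 0 := by
  obtain ⟨α, β, hα, hβ, hab⟩ := h
  obtain ⟨C, hC, hb⟩ := hβ.bound
  refine ⟨1 / C, by positivity, fun g' hg' hd z hz h0 hf => ?_⟩
  have h1 := hab z hz
  have h2 := hd z hz
  rw [hf, mul_zero, zero_add] at h1
  rw [h0, zero_sub, norm_neg] at h2
  have : ‖β z * g z‖ < 1 := by
    rw [norm_mul]
    calc ‖β z‖ * ‖g z‖ ≤ C * ‖g z‖ := by gcongr; exact hb z hz
      _ < C * (1 / C) := by gcongr
      _ = 1 := by field_simp
  rw [h1] at this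
  simp at this

lemma BezoutPair.mul {f g g' : ℂ → ℂ} (hf : IsRDisc f) (hg : IsRDisc g) (hg' : IsRDisc g')
    (h : BezoutPair f g) (h' : BezoutPair f g') : BezoutPair f (fun z => g z * g' z) := by
  obtain ⟨α, β, hα, hβ, hab⟩ := h
  obtain ⟨α', β', hα', hβ', hab'⟩ := h'
  refine ⟨fun z => α z * α' z * f z + (α z * (β' z * g' z) + (β z * g z) * α' z), _,
    ((hα.mul hα').mul hf).add ((hα.mul (hβ'.mul hg')).add ((hβ.mul hg).mul hα')), hβ.mul hβ',
    fun z hz => ?_⟩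
  simp only
  linear_combination (α' z * f z + β' z * g' z) * hab z hz + hab' z hz

lemma BezoutPair.of_mul {f g g' : ℂ → ℂ} (hg' : IsRDisc g')
    (h : BezoutPair f (fun z => g z * g' z)) : BezoutPair f g := by
  obtain ⟨α, β, hα, hβ, hab⟩ := h
  exact ⟨α, _, hα, hβ.mul hg', fun z hz => by rw [← hab z hz]; ring⟩

lemma BezoutPair.of_unit {f g : ℂ → ℂ} (hg : IsRDiscUnit g) : BezoutPair f g :=
  ⟨_, _, isRDisc_const 0, isRDisc_one.div hg, fun z hz => by
    have := hg.2 z hz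
    simp [this]⟩

lemma path_lemma (P : ℂ → Prop) (γ : ℝ → ℂ) (hγ : Continuous γ)
    (h : ∀ t ∈ Set.Icc (0 : ℝ) 1, ∀ᶠ c in nhds (γ t), (P c ↔ P (γ t))) : P (γ 0) ↔ P (γ 1) := by
  have : IsLocallyConstant (fun t : unitInterval => P (γ t)) := by
    rw [IsLocallyConstant.iff_eventually_eq]
    intro t
    have hc : Continuous (fun t : unitInterval => γ t) := hγ.comp continuous_subtype_val
    filter_upwards [hc.continuousAt.eventually (h t t.2)] with s hs
    exact propext hs
  have := this.apply_eq_of_preconnectedSpace 0 1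
  simpa using this

lemma approx_poly {g : ℂ → ℂ} (hg : IsRDisc g) {ε : ℝ} (hε : 0 < ε) :
    ∃ p : Polynomial ℝ, ∀ z ∈ closedBall (0 : ℂ) 1, ‖Polynomial.aeval z p - g z‖ < ε := by
  have huc := (isCompact_closedBall (0 : ℂ) 1).uniformContinuousOn_of_continuous hg.1
  rw [Metric.uniformContinuousOn_iff] at huc
  obtain ⟨δ, hδ, hu⟩ := huc (ε / 2) (by positivity)
  obtain ⟨s, hs0, hs1, hsd⟩ : ∃ s : ℝ, 0 < s ∧ s < 1 ∧ 3 * s < δ ∧ 3 * s < 1 := by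
    refine ⟨min (δ / 4) (1 / 4), by positivity, ?_, ?_, ?_⟩ <;>
    · have := min_le_left (δ / 4) (1 / 4)
      have := min_le_right (δ / 4) (1 / 4)
      linarith
  obtain ⟨hsd, hs3⟩ := hsd
  set R : NNReal := ⟨1 - s, by linarith⟩ with hR
  set R' : NNReal := ⟨1 - 2 * s, by linarith⟩ with hR'
  have hRv : (R : ℝ) = 1 - s := rfl
  have hRv' : (R' : ℝ) = 1 - 2 * s := rfl
  have hps := (hg.2.1.mono (closedBall_subset_ball (x := (0:ℂ)) (ε₁ := (R : ℝ)) (ε₂ := 1)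
    (by rw [hRv]; linarith))).hasFPowerSeriesOnBall (R := R)
    (by rw [← NNReal.coe_pos, hRv]; linarith)
  have htu := hps.tendstoUniformlyOn (r' := R')
    (by rw [ENNReal.coe_lt_coe, ← NNReal.coe_lt_coe, hRv, hRv']; linarith)
  rw [Metric.tendstoUniformlyOn_iff] at htu
  obtain ⟨n, hn⟩ := (htu (ε / 2) (by positivity)).exists
  set a := (cauchyPowerSeries g 0 (R : ℝ)).coeff with ha
  set r : ℝ := 1 - 3 * s with hr
  have hQ : ∀ z ∈ closedBall (0 : ℂ) 1,
      ‖(∑ k ∈ Finset.range n, ((r : ℂ) * z) ^ k * a k) - g z‖ < ε := by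
    intro z hz
    have hz1 : ‖z‖ ≤ 1 := by simpa using hz
    have hnr : ‖(r : ℂ) * z‖ ≤ r := by
      rw [norm_mul, Complex.norm_real, Real.norm_of_nonneg (by linarith)]
      exact mul_le_of_le_one_right (by linarith) hz1
    have h1 := hn ((r : ℂ) * z) (by
      rw [mem_ball_zero_iff, hRv']; linarith)
    have h2 := hu ((r : ℂ) * z) (by rw [mem_closedBall_zero_iff]; linarith) z hz (by
      rw [dist_eq_norm]
      have : (r : ℂ) * z - z = ((-(3 * s) : ℝ) : ℂ) * z := by rw [hr]; push_cast; ring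
      rw [this, norm_mul, Complex.norm_real, norm_neg, Real.norm_of_nonneg (by linarith)]
      nlinarith)
    rw [zero_add, FormalMultilinearSeries.partialSum] at h1
    simp only [FormalMultilinearSeries.apply_eq_pow_smul_coeff, smul_eq_mul] at h1
    rw [← dist_eq_norm]
    rw [dist_comm] at h1
    linarith [dist_triangle (∑ k ∈ Finset.range n, ((r : ℂ) * z) ^ k * a k) (g ((r : ℂ) * z)) (g z)]
  refine ⟨∑ k ∈ Finset.range n, Polynomial.C (r ^ k * (a k).re) * Polynomial.X ^ k, ?_⟩
  intro z hz
  have h1 := hQ z hz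
  have h2 := hQ (conj z) (mem_cb_conj hz)
  rw [← Complex.norm_conj, map_sub, ← hg.2.2 z hz] at h2
  have key : Polynomial.aeval z
      (∑ k ∈ Finset.range n, Polynomial.C (r ^ k * (a k).re) * Polynomial.X ^ k) - g z
      = (1 / 2 : ℝ) * (((∑ k ∈ Finset.range n, ((r : ℂ) * z) ^ k * a k) - g z)
        + (conj (∑ k ∈ Finset.range n, ((r : ℂ) * conj z) ^ k * a k) - g z)) := by
    have : Polynomial.aeval z
      (∑ k ∈ Finset.range n, Polynomial.C (r ^ k * (a k).re) * Polynomial.X ^ k)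
      = (1 / 2 : ℝ) * ((∑ k ∈ Finset.range n, ((r : ℂ) * z) ^ k * a k)
        + (conj (∑ k ∈ Finset.range n, ((r : ℂ) * conj z) ^ k * a k))) := by
      rw [map_sum, map_sum, ← Finset.sum_add_distrib, Finset.mul_sum]
      refine Finset.sum_congr rfl fun k _ => ?_
      simp only [map_mul, map_pow, Polynomial.aeval_C, Polynomial.aeval_X, Complex.conj_conj,
        Complex.conj_ofReal, Complex.coe_algebraMap]
      push_cast
      rw [Complex.re_eq_add_conj]
      ring
    rw [this]; push_cast; ring
  rw [key, norm_mul, Complex.norm_real]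
  have := norm_add_le ((∑ k ∈ Finset.range n, ((r : ℂ) * z) ^ k * a k) - g z)
    (conj (∑ k ∈ Finset.range n, ((r : ℂ) * conj z) ^ k * a k) - g z)
  norm_num
  norm_num at this h1 h2
  linarith

def CDisc (f : ℂ → ℂ) : Prop :=
  ContinuousOn f (closedBall (0 : ℂ) 1) ∧ DifferentiableOn ℂ f (ball (0 : ℂ) 1)

lemma CDisc.mul {f g : ℂ → ℂ} (hf : CDisc f) (hg : CDisc g) : CDisc (fun z => f z * g z) :=
  ⟨hf.1.mul hg.1, hf.2.mul hg.2⟩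

lemma CDisc.star {f : ℂ → ℂ} (hf : CDisc f) : CDisc (fun z => conj (f (conj z))) := by
  constructor
  · exact Complex.continuous_conj.comp_continuousOn
      (hf.1.comp Complex.continuous_conj.continuousOn (fun z hz => mem_cb_conj hz))
  · intro z hz
    have hz' : conj z ∈ ball (0 : ℂ) 1 := by simpa using hz
    have := (hf.2.differentiableAt (isOpen_ball.mem_nhds hz')).conj_conj
    rw [Complex.conj_conj] at this
    exact this.differentiableWithinAt

lemma CDisc.symm_mul {f : ℂ → ℂ} (hf : CDisc f) : IsRDisc (fun z => f z * conj (f (conj z))) :=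
  ⟨(hf.mul hf.star).1, (hf.mul hf.star).2, fun z _ => by simp; ring⟩

lemma CDisc.symm_add {f : ℂ → ℂ} (hf : CDisc f) : IsRDisc (fun z => f z + conj (f (conj z))) :=
  ⟨hf.1.add hf.star.1, hf.2.add hf.star.2, fun z _ => by simp; ring⟩

lemma sub_ne_of_norm {c z : ℂ} (hc : 1 < ‖c‖) (hz : z ∈ closedBall (0 : ℂ) 1) : z - c ≠ 0 := by
  intro h
  rw [sub_eq_zero] at h
  rw [mem_closedBall_zero_iff, h] at hz
  linarith

lemma unit_quad {c : ℂ} (hc : 1 < ‖c‖) : IsRDiscUnit (fun z => (z - c) * (z - conj c)) :=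
  ⟨isRDisc_quad c, fun z hz => mul_ne_zero (sub_ne_of_norm hc hz)
    (sub_ne_of_norm (by rwa [Complex.norm_conj]) hz)⟩

lemma unit_lin {a : ℝ} (hc : 1 < |a|) : IsRDiscUnit (fun z => z - (a : ℂ)) :=
  ⟨isRDisc_lin a, fun z hz => (sub_ne_of_norm (by rwa [Complex.norm_real, Real.norm_eq_abs]) hz)⟩

lemma bez_quad {f : ℂ → ℂ} (hf : IsRDisc f) (c : ℂ) (hc : ‖c‖ ≤ 1 → f c ≠ 0) :
    BezoutPair f (fun z => (z - c) * (z - conj c)) := by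
  by_cases h1 : 1 < ‖c‖
  · exact BezoutPair.of_unit (unit_quad h1)
  have h1' : ‖c‖ ≤ 1 := not_lt.1 h1
  have hfc := hc h1'
  obtain ⟨p, hp⟩ := approx_poly hf (ε := ‖f c‖ / 2) (by positivity)
  set P := p.map (algebraMap ℝ ℂ) with hP
  have hPe : ∀ z : ℂ, P.eval z = Polynomial.aeval z p := fun z => by
    rw [hP, Polynomial.eval_map_algebraMap]
  obtain ⟨s, hs⟩ : (Polynomial.X - Polynomial.C c) ∣ P - Polynomial.C (P.eval c) :=
    Polynomial.X_sub_C_dvd_sub_C_eval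
  have hse : ∀ z : ℂ, P.eval z - P.eval c = (z - c) * s.eval z := fun z => by
    simpa using congrArg (Polynomial.eval z) hs
  have hden : ∀ z ∈ closedBall (0 : ℂ) 1, f z - P.eval z + P.eval c ≠ 0 := by
    intro z hz h0
    have e1 := hp z hz
    have e2 := hp c (by simpa using h1')
    rw [← hPe] at e1 e2
    have : f c = (P.eval z - f z) - (P.eval c - f c) := by linear_combination h0
    have h3 := norm_sub_le (P.eval z - f z) (P.eval c - f c)
    rw [← this] at h3
    linarith
  set α : ℂ → ℂ := fun z => 1 / (f z - P.eval z + P.eval c) with hα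
  set β : ℂ → ℂ := fun z => -(α z * s.eval z) with hβ
  have cα : CDisc α := by
    constructor
    · exact continuousOn_const.div ((hf.1.sub P.continuous.continuousOn).add continuousOn_const) hden
    · exact (differentiableOn_const _).div ((hf.2.1.sub P.differentiable.differentiableOn).add
        (differentiableOn_const _)) fun z hz => hden z (ball_subset_closedBall hz)
  have cβ : CDisc β :=
    ⟨(cα.1.mul s.continuous.continuousOn).neg, (cα.2.mul s.differentiable.differentiableOn).neg⟩
  have hab : ∀ z ∈ closedBall (0 : ℂ) 1, α z * f z + β z * (z - c) = 1 := by
    intro z hz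
    have h0 := hden z hz
    have : α z * (f z - P.eval z + P.eval c) = 1 := by
      rw [hα]; simp only; rw [one_div, inv_mul_cancel₀ h0]
    rw [hβ]
    linear_combination this + α z * hse z
  have cm : CDisc (fun z => α z * conj (β (conj z)) * (z - conj c)) :=
    (cα.mul cβ.star).mul ⟨by fun_prop, by fun_prop⟩
  refine ⟨_, _, (cα.symm_mul.mul hf).add cm.symm_add, cβ.symm_mul, fun z hz => ?_⟩
  have e1 := hab z hz
  have e2 := congrArg conj (hab (conj z) (mem_cb_conj hz))
  simp only [map_add, map_mul, map_sub, map_one, Complex.conj_conj] at e2 ⊢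
  rw [← hf.2.2 z hz] at e2
  linear_combination (conj (α (conj z)) * f z + conj (β (conj z)) * (z - conj c)) * e1 + e2

lemma bez_lin {f : ℂ → ℂ} (hf : IsRDisc f) (a : ℝ) (hc : |a| ≤ 1 → f a ≠ 0) :
    BezoutPair f (fun z => z - (a : ℂ)) := by
  have := bez_quad hf a (by simpa using hc)
  simp only [Complex.conj_ofReal] at this
  exact this.of_mul (isRDisc_lin a)

lemma quad_near (c : ℂ) {ε : ℝ} (hε : 0 < ε) : ∀ᶠ c' in nhds c, ∀ z ∈ closedBall (0 : ℂ) 1,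
    ‖(z - c') * (z - conj c') - (z - c) * (z - conj c)‖ < ε := by
  have h1 : Filter.Tendsto (fun c' : ℂ => 2 * ‖c - c'‖ + ‖c' * conj c' - c * conj c‖) (nhds c)
      (nhds 0) := by
    have : Continuous (fun c' : ℂ => 2 * ‖c - c'‖ + ‖c' * conj c' - c * conj c‖) := by fun_prop
    simpa using this.tendsto c
  filter_upwards [h1.eventually (gt_mem_nhds hε)] with c' hc' z hz
  have hz1 : ‖z‖ ≤ 1 := by simpa using hz
  refine lt_of_le_of_lt ?_ hc'
  have e : (z - c') * (z - conj c') - (z - c) * (z - conj c)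
      = z * ((c - c') + conj (c - c')) + (c' * conj c' - c * conj c) := by
    rw [map_sub]; ring
  rw [e]
  refine (norm_add_le _ _).trans ?_
  gcongr
  rw [norm_mul]
  have h2 := norm_add_le (c - c') (conj (c - c'))
  rw [Complex.norm_conj] at h2
  calc _ ≤ 1 * ‖(c - c') + conj (c - c')‖ := by gcongr
    _ ≤ _ := by linarith

lemma RR.quad_local {f : ℂ → ℂ} (hf : IsRDisc f) (c : ℂ) (hc : ‖c‖ ≤ 1 → f c ≠ 0) :
    ∀ᶠ c' in nhds c, (RR f (fun z => (z - c') * (z - conj c')) ↔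
      RR f (fun z => (z - c) * (z - conj c))) := by
  obtain ⟨ε, hε, h⟩ := RR.local (isRDisc_quad c) (bez_quad hf c hc)
  filter_upwards [quad_near c hε] with c' hc'
  exact h _ (isRDisc_quad c') hc'

/-- multiplied linear family -/
lemma RR.lin_local {f m : ℂ → ℂ} (hf : IsRDisc f) (hm : IsRDisc m) (hb : BezoutPair f m)
    (a : ℝ) (hc : |a| ≤ 1 → f a ≠ 0) :
    ∀ᶠ c' in nhds (a : ℂ), (RR f (fun z => m z * (z - (c'.re : ℂ))) ↔
      RR f (fun z => m z * (z - (a : ℂ)))) := by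
  obtain ⟨ε, hε, h⟩ := RR.local (hm.mul (isRDisc_lin a))
    (hb.mul hf hm (isRDisc_lin a) (bez_lin hf a hc))
  obtain ⟨C, hC, hmb⟩ := hm.bound
  filter_upwards [Metric.ball_mem_nhds (a : ℂ) (show 0 < ε / C by positivity)] with c' hc'
  refine h _ (hm.mul (isRDisc_lin c'.re)) fun z hz => ?_
  have e : m z * (z - (c'.re : ℂ)) - m z * (z - (a : ℂ)) = m z * (((a - c'.re : ℝ)) : ℂ) := by
    push_cast; ring
  rw [e, norm_mul, Complex.norm_real, Real.norm_eq_abs]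
  have h2 : |a - c'.re| < ε / C := by
    rw [mem_ball, dist_eq_norm] at hc'
    have := Complex.abs_re_le_norm (c' - a)
    rw [Complex.sub_re, Complex.ofReal_re, abs_sub_comm] at this
    linarith
  calc _ ≤ C * |a - c'.re| := by gcongr; exact hmb z hz
    _ < C * (ε / C) := by gcongr
    _ = ε := by field_simp

lemma RR.lin_path {f m : ℂ → ℂ} (hf : IsRDisc f) (hm : IsRDisc m) (hb : BezoutPair f m)
    (a b : ℝ) (hc : ∀ t ∈ Set.Icc (0 : ℝ) 1, |a + t * (b - a)| ≤ 1 →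
      f ((a + t * (b - a) : ℝ) : ℂ) ≠ 0) :
    RR f (fun z => m z * (z - (a : ℂ))) ↔ RR f (fun z => m z * (z - (b : ℂ))) := by
  have := path_lemma (fun c => RR f (fun z => m z * (z - (c.re : ℂ))))
    (fun t => ((a + t * (b - a) : ℝ) : ℂ)) (by fun_prop) (fun t ht => by
      have := RR.lin_local hf hm hb (a + t * (b - a)) (hc t ht)
      simpa only [Complex.ofReal_re] using this)
  simpa using this

lemma RR.quad_path {f : ℂ → ℂ} (hf : IsRDisc f)
    (a b : ℂ) (hc : ∀ t ∈ Set.Icc (0 : ℝ) 1, ‖a + t * (b - a)‖ ≤ 1 →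
      f (a + t * (b - a)) ≠ 0) :
    RR f (fun z => (z - a) * (z - conj a)) ↔ RR f (fun z => (z - b) * (z - conj b)) := by
  have := path_lemma (fun c => RR f (fun z => (z - c) * (z - conj c)))
    (fun t => a + t * (b - a)) (by fun_prop) (fun t ht =>
      RR.quad_local hf (a + t * (b - a)) (hc t ht))
  simpa using this

lemma RR.quad {f : ℂ → ℂ} (hf : IsRDisc f) (h0 : ∀ z ∈ ball (0 : ℂ) 1, f z ≠ 0) {e : ℂ}
    (he : ‖e‖ = 1) (hfe : f e ≠ 0) (c : ℂ) (hc : ‖c‖ ≤ 1 → f c ≠ 0) :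
    RR f (fun z => (z - c) * (z - conj c)) := by
  -- points on the circle first
  have circ : ∀ e : ℂ, ‖e‖ = 1 → f e ≠ 0 → RR f (fun z => (z - e) * (z - conj e)) := by
    intro e he hfe
    refine (RR.quad_path hf e (2 * e) ?_).2 (RR.of_unit (unit_quad ?_))
    · intro t ht hn
      have e1 : e + t * (2 * e - e) = ((1 + t : ℝ) : ℂ) * e := by push_cast; ring
      rw [e1, norm_mul, he, Complex.norm_real, Real.norm_of_nonneg (by linarith [ht.1])] at hn
      have : t = 0 := by linarith [ht.1]
      subst this
      simpa using hfe
    · rw [norm_mul, he]; norm_num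
  rcases lt_trichotomy ‖c‖ 1 with h | h | h
  · refine (RR.quad_path hf c e ?_).2 (circ e he hfe)
    intro t ht _
    rcases eq_or_lt_of_le ht.2 with h1 | h1
    · subst h1; simpa using hfe
    · apply h0
      rw [mem_ball_zero_iff]
      have e1 : c + t * (e - c) = ((1 - t : ℝ) : ℂ) * c + (t : ℂ) * e := by push_cast; ring
      rw [e1]
      refine (norm_add_le _ _).trans_lt ?_
      rw [norm_mul, norm_mul, he, Complex.norm_real, Complex.norm_real,
        Real.norm_of_nonneg (by linarith [ht.1]), Real.norm_of_nonneg ht.1]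
      nlinarith
  · exact circ c h (hc h.le)
  · exact RR.of_unit (unit_quad h)

lemma poly_induct (f : ℂ → ℂ) (D : Polynomial ℝ → Prop)
    (hC : ∀ a : ℝ, a ≠ 0 → D (Polynomial.C a))
    (hL : ∀ a : ℝ, (|a| ≤ 1 → f a ≠ 0) → D (Polynomial.X - Polynomial.C a))
    (hQ : ∀ c : ℂ, c.im ≠ 0 → (‖c‖ ≤ 1 → f c ≠ 0) →
      D (Polynomial.X ^ 2 - Polynomial.C (2 * c.re) * Polynomial.X + Polynomial.C (‖c‖ ^ 2)))
    (hM : ∀ p q, D p → D q → D (p * q)) :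
    ∀ (n : ℕ) (p : Polynomial ℝ), p ≠ 0 → p.natDegree ≤ n →
      (∀ c : ℂ, ‖c‖ ≤ 1 → Polynomial.aeval c p = 0 → f c ≠ 0) → D p := by
  intro n
  induction n with
  | zero =>
    intro p hp hd _
    rw [Polynomial.eq_C_of_natDegree_le_zero hd]
    apply hC
    intro h
    apply hp
    rw [Polynomial.eq_C_of_natDegree_le_zero hd, h, Polynomial.C_0]
  | succ n ih =>
    intro p hp hd hr
    by_cases hd0 : p.natDegree ≤ n
    · exact ih p hp hd0 hr
    have hdeg : 0 < (p.map (algebraMap ℝ ℂ)).degree := by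
      rw [Polynomial.degree_map]
      exact Polynomial.natDegree_pos_iff_degree_pos.1 (by omega)
    obtain ⟨c, hc⟩ := Complex.exists_root hdeg
    have hc' : Polynomial.aeval c p = 0 := by
      rw [← Polynomial.eval_map_algebraMap]; exact hc
    have hfc : ‖c‖ ≤ 1 → f c ≠ 0 := fun h => hr c h hc'
    by_cases him : c.im = 0
    · have hcr : c = (c.re : ℂ) := by apply Complex.ext <;> simp [him]
      have : (Polynomial.X - Polynomial.C c.re) ∣ p := by
        rw [Polynomial.dvd_iff_isRoot, Polynomial.IsRoot]
        rw [hcr] at hc'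
        have h3 := Polynomial.aeval_algebraMap_apply ℂ c.re p
        rw [Complex.coe_algebraMap, hc'] at h3
        simpa using h3.symm
      obtain ⟨q, hq⟩ := this
      have hq0 : q ≠ 0 := by rintro rfl; simp at hq; exact hp hq
      rw [hq]
      refine hM _ _ (hL _ ?_) (ih q hq0 ?_ ?_)
      · intro h; rw [← hcr]; apply hfc; rw [hcr]; simpa using h
      · rw [hq, Polynomial.natDegree_mul (Polynomial.X_sub_C_ne_zero _) hq0,
          Polynomial.natDegree_X_sub_C] at hd
        omega
      · intro d hd hdq
        exact hr d hd (by rw [hq, map_mul, hdq, mul_zero])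
    · obtain ⟨q, hq⟩ := Polynomial.quadratic_dvd_of_aeval_eq_zero_im_ne_zero p hc' him
      have hq0 : q ≠ 0 := by rintro rfl; simp at hq; exact hp hq
      have hd2 : (Polynomial.X ^ 2 - Polynomial.C (2 * c.re) * Polynomial.X +
          Polynomial.C (‖c‖ ^ 2)).natDegree = 2 := by compute_degree!
      rw [hq]
      refine hM _ _ (hQ c him hfc) (ih q hq0 ?_ ?_)
      · rw [hq, Polynomial.natDegree_mul (by intro h; rw [h] at hd2; simp at hd2) hq0, hd2] at hd
        omega
      · intro d hd hdq
        exact hr d hd (by rw [hq, map_mul, hdq, mul_zero])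

lemma quad_eval (c : ℂ) (z : ℂ) : Polynomial.aeval z
    (Polynomial.X ^ 2 - Polynomial.C (2 * c.re) * Polynomial.X + Polynomial.C (‖c‖ ^ 2) :
      Polynomial ℝ) = (z - c) * (z - conj c) := by
  simp only [map_add, map_sub, map_mul, map_pow, Polynomial.aeval_C, Polynomial.aeval_X,
    Complex.coe_algebraMap]
  have h1 := Complex.mul_conj' c
  have h2 := Complex.add_conj c
  push_cast at h2 ⊢
  linear_combination -h1 + z * h2

lemma lin_eval (a : ℝ) (z : ℂ) : Polynomial.aeval z
    (Polynomial.X - Polynomial.C a : Polynomial ℝ) = z - (a : ℂ) := by simp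

lemma unit_C {a : ℝ} (ha : a ≠ 0) :
    IsRDiscUnit (fun z => Polynomial.aeval z (Polynomial.C a : Polynomial ℝ)) :=
  ⟨isRDisc_poly _, fun z _ => by simpa using ha⟩

lemma caseA_lin {f : ℂ → ℂ} (hf : IsRDisc f) (h0 : ∀ z ∈ ball (0 : ℂ) 1, f z ≠ 0)
    (h1 : f 1 ≠ 0 ∨ f (-1) ≠ 0) (a : ℝ) (ha : |a| ≤ 1 → f a ≠ 0) :
    RR f (fun z => z - (a : ℂ)) := by
  by_cases hgt : 1 < |a|
  · exact RR.of_unit (unit_lin hgt)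
  have hle : |a| ≤ 1 := not_lt.1 hgt
  have hfa := ha hle
  have hle' := abs_le.1 hle
  have hint : ∀ b : ℝ, |b| < 1 → f b ≠ 0 := fun b hb => h0 _ (by simpa using hb)
  have key : ∀ b : ℝ, 1 < |b| → (∀ t ∈ Set.Icc (0 : ℝ) 1, |a + t * (b - a)| ≤ 1 →
      f ((a + t * (b - a) : ℝ) : ℂ) ≠ 0) → RR f (fun z => z - (a : ℂ)) := by
    intro b hb hp
    have := (RR.lin_path hf isRDisc_one (BezoutPair.of_unit ⟨isRDisc_one, by simp⟩) a b hp).2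
    simp only [one_mul] at this
    exact this (RR.of_unit (unit_lin hb))
  rcases h1 with h1 | h1
  · refine key 2 (by norm_num) fun t ht hn => ?_
    have hn' := abs_le.1 hn
    have hmono : a ≤ a + t * (2 - a) := by nlinarith [ht.1]
    rcases lt_or_eq_of_le hn'.2 with h3 | h3
    · rcases lt_or_eq_of_le hmono with h4 | h4
      · exact hint _ (abs_lt.2 ⟨by linarith, h3⟩)
      · rw [← h4]; exact hfa
    · rw [h3]; simpa using h1
  · refine key (-2) (by norm_num) fun t ht hn => ?_
    have hn' := abs_le.1 hn
    have hmono : a + t * (-2 - a) ≤ a := by nlinarith [ht.1]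
    rcases lt_or_eq_of_le hn'.1 with h3 | h3
    · rcases lt_or_eq_of_le hmono with h4 | h4
      · exact hint _ (abs_lt.2 ⟨h3, by linarith⟩)
      · rw [h4]; exact hfa
    · rw [← h3]; simpa using h1

lemma caseA {f : ℂ → ℂ} (hf : IsRDisc f) (h0 : ∀ z ∈ ball (0 : ℂ) 1, f z ≠ 0)
    {e : ℂ} (he : ‖e‖ = 1) (hfe : f e ≠ 0)
    (h1 : f 1 ≠ 0 ∨ f (-1) ≠ 0) (p : Polynomial ℝ) (hp : p ≠ 0)
    (hr : ∀ c : ℂ, ‖c‖ ≤ 1 → Polynomial.aeval c p = 0 → f c ≠ 0) :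
    RR f (fun z => Polynomial.aeval z p) := by
  refine poly_induct f (fun p => RR f (fun z => Polynomial.aeval z p)) ?_ ?_ ?_ ?_ _ p hp le_rfl hr
  · exact fun a ha => RR.of_unit (unit_C ha)
  · intro a ha
    simp only [lin_eval]
    exact caseA_lin hf h0 h1 a ha
  · intro c _ hc
    simp only [quad_eval]
    exact RR.quad hf h0 he hfe c hc
  · intro p q h1 h2
    simp only [map_mul]
    exact h1.mul hf (isRDisc_poly q) h2

lemma caseB {f : ℂ → ℂ} (hf : IsRDisc f) (h0 : ∀ z ∈ ball (0 : ℂ) 1, f z ≠ 0)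
    {e : ℂ} (he : ‖e‖ = 1) (hfe : f e ≠ 0)
    (h1 : f 1 = 0) (h1' : f (-1) = 0) (p : Polynomial ℝ) (hp : p ≠ 0)
    (hr : ∀ c : ℂ, ‖c‖ ≤ 1 → Polynomial.aeval c p = 0 → f c ≠ 0)
    (hpos : 0 < p.eval 1 * p.eval (-1)) :
    RR f (fun z => Polynomial.aeval z p) := by
  have hzz : RR f (fun z => z * z) := by
    have := RR.quad hf h0 he hfe 0 (fun _ => h0 0 (by simp))
    simpa using this
  have hbz : BezoutPair f (fun z => z) := by
    have := bez_lin hf 0 (fun _ => h0 _ (by simp))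
    simpa using this
  have := poly_induct f (fun p =>
    (0 < p.eval 1 * p.eval (-1) ∧ RR f (fun z => Polynomial.aeval z p)) ∨
    (p.eval 1 * p.eval (-1) < 0 ∧ RR f (fun z => z * Polynomial.aeval z p)))
    ?_ ?_ ?_ ?_ _ p hp le_rfl hr
  · rcases this with h | h
    · exact h.2
    · linarith [h.1]
  · intro a ha
    left
    refine ⟨?_, RR.of_unit (unit_C ha)⟩
    simp only [Polynomial.eval_C]
    exact mul_self_pos.2 ha
  · intro a ha
    simp only [lin_eval]
    rcases lt_trichotomy |a| 1 with h | h | h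
    · right
      have h' := abs_lt.1 h
      refine ⟨by simp only [Polynomial.eval_sub, Polynomial.eval_X, Polynomial.eval_C]; nlinarith, ?_⟩
      refine (RR.lin_path hf isRDisc_id hbz a 0 ?_).2 (by simpa using hzz)
      intro t ht _
      apply h0
      rw [mem_ball_zero_iff, Complex.norm_real, Real.norm_eq_abs]
      have : a + t * (0 - a) = (1 - t) * a := by ring
      rw [this, abs_mul, abs_of_nonneg (by linarith [ht.2])]
      nlinarith [ht.1, ht.2, abs_nonneg a]
    · exfalso
      have := ha h.le
      rcases (abs_eq zero_le_one).1 h with h | h <;> rw [h] at this <;> simp [h1, h1'] at this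
    · left
      refine ⟨?_, RR.of_unit (unit_lin h)⟩
      simp only [Polynomial.eval_sub, Polynomial.eval_X, Polynomial.eval_C]
      have := (one_lt_sq_iff_one_lt_abs a).2 h
      nlinarith
  · intro c him hc
    left
    refine ⟨?_, by simp only [quad_eval]; exact RR.quad hf h0 he hfe c hc⟩
    have hn : ‖c‖ ^ 2 = c.re ^ 2 + c.im ^ 2 := by
      rw [← Complex.normSq_eq_norm_sq, Complex.normSq_apply]; ring
    have : 0 < c.im ^ 2 := by positivity
    simp only [Polynomial.eval_add, Polynomial.eval_sub, Polynomial.eval_mul, Polynomial.eval_pow,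
      Polynomial.eval_X, Polynomial.eval_C, hn]
    apply mul_pos <;> nlinarith [sq_nonneg (1 - c.re), sq_nonneg (1 + c.re)]
  · intro p q hp hq
    have ep : (p * q).eval 1 * (p * q).eval (-1)
      = (p.eval 1 * p.eval (-1)) * (q.eval 1 * q.eval (-1)) := by
      simp only [Polynomial.eval_mul]; ring
    rw [ep]
    simp only [map_mul]
    rcases hp with ⟨hp, rp⟩ | ⟨hp, rp⟩ <;> rcases hq with ⟨hq, rq⟩ | ⟨hq, rq⟩
    · exact Or.inl ⟨mul_pos hp hq, rp.mul hf (isRDisc_poly q) rq⟩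
    · refine Or.inr ⟨mul_neg_of_pos_of_neg hp hq, ?_⟩
      have := rp.mul hf (isRDisc_id.mul (isRDisc_poly q)) rq
      refine (congrArg (RR f) (funext fun z => ?_)).mp this
      ring
    · refine Or.inr ⟨mul_neg_of_neg_of_pos hp hq, ?_⟩
      have := rp.mul hf (isRDisc_poly q) rq
      refine (congrArg (RR f) (funext fun z => ?_)).mp this
      ring
    · refine Or.inl ⟨mul_pos_of_neg_of_neg hp hq, ?_⟩
      have := rp.mul hf (isRDisc_id.mul (isRDisc_poly q)) rq
      refine RR.cancel ((isRDisc_poly p).mul (isRDisc_poly q)) hzz ?_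
      refine (congrArg (RR f) (funext fun z => ?_)).mp this
      ring

lemma poly_sign {p : Polynomial ℝ} {w : ℂ} {s : ℝ} (h : ‖Polynomial.aeval (s : ℂ) p - w‖ < |w.re|) :
    0 < p.eval s * w.re := by
  have h3 := Polynomial.aeval_algebraMap_apply ℂ s p
  rw [Complex.coe_algebraMap] at h3
  rw [h3] at h
  have h4 := Complex.abs_re_le_norm ((algebraMap ℝ ℂ) ((Polynomial.aeval s) p) - w)
  simp at h4 h
  have h5 : |p.eval s - w.re| < |w.re| := h4.trans_lt h
  have := sq_lt_sq.2 h5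
  nlinarith [sq_nonneg (p.eval s)]

lemma RR.main {f g : ℂ → ℂ} (hf : IsRDisc f) (hg : IsRDisc g) (hb : BezoutPair f g)
    (hsign : ConstSignOnRealZeros g f) (h0 : ∀ z ∈ ball (0 : ℂ) 1, f z ≠ 0) : RR f g := by
  obtain ⟨e, he, hfe⟩ : ∃ e : ℂ, ‖e‖ = 1 ∧ f e ≠ 0 := by
    by_contra! hcon
    have hd : DiffContOnCl ℂ f (ball (0 : ℂ) 1) :=
      ⟨hf.2.1, by rw [closure_ball _ one_ne_zero]; exact hf.1⟩
    have := Complex.norm_le_of_forall_mem_frontier_norm_le isBounded_ball hd (C := 0)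
      (fun z hz => by
        rw [frontier_ball _ one_ne_zero, mem_sphere_zero_iff_norm] at hz
        simp [hcon z hz]) (z := 0) (subset_closure (by simp))
    exact h0 0 (by simp) (norm_le_zero_iff.1 this)
  obtain ⟨ε₁, hε₁, H1⟩ := RR.local hg hb
  obtain ⟨ε₂, hε₂, H2⟩ := BezoutPair.perturb hg hb
  have one_mem : (1 : ℂ) ∈ closedBall (0 : ℂ) 1 := by simp
  have mone_mem : (-1 : ℂ) ∈ closedBall (0 : ℂ) 1 := by simp
  have nz : ∀ p : Polynomial ℝ, (∀ c : ℂ, ‖c‖ ≤ 1 → Polynomial.aeval c p = 0 → f c ≠ 0) →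
      (f 1 = 0 ∨ f (-1) = 0) → p ≠ 0 := by
    rintro p hp h rfl
    rcases h with h | h
    · exact hp 1 (by simp) (by simp) h
    · exact hp (-1) (by simp) (by simp) h
  by_cases hA : f 1 ≠ 0 ∨ f (-1) ≠ 0
  · obtain ⟨p, hp⟩ := approx_poly hg (ε := min ε₁ ε₂) (by positivity)
    have hr : ∀ c : ℂ, ‖c‖ ≤ 1 → Polynomial.aeval c p = 0 → f c ≠ 0 := fun c hc => 
      H2 _ (isRDisc_poly p) (fun z hz => (hp z hz).trans_le (min_le_right _ _)) c (by simpa using hc)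
    refine (H1 _ (isRDisc_poly p) (fun z hz => (hp z hz).trans_le (min_le_left _ _))).1 ?_
    by_cases hp0 : p = 0
    · -- then f has no zeros at all
      have hfu : IsRDiscUnit f := ⟨hf, fun z hz => hr z (by simpa using hz) (by simp [hp0])⟩
      refine ⟨_, fun z => (1 - Polynomial.aeval z p) / f z, ⟨isRDisc_one, by simp⟩,
        (isRDisc_one.sub (isRDisc_poly p)).div hfu, fun z hz => ?_⟩
      have := hfu.2 z hz
      field_simp
      ring
    · exact caseA hf h0 he hfe hA p hp0 hr
  · push Not at hA
    have hs : 0 < (g 1).re * (g (-1)).re := by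
      rcases hsign with h | h
      · exact mul_pos (by simpa using h 1 (by simp) (by simpa using hA.1))
          (by simpa using h (-1) (by simp) (by simpa using hA.2))
      · exact mul_pos_of_neg_of_neg (by simpa using h 1 (by simp) (by simpa using hA.1))
          (by simpa using h (-1) (by simp) (by simpa using hA.2))
    have hs1 : 0 < |(g 1).re| := abs_pos.2 (by intro h; rw [h] at hs; simp at hs)
    have hs2 : 0 < |(g (-1)).re| := abs_pos.2 (by intro h; rw [h] at hs; simp at hs)
    obtain ⟨p, hp⟩ := approx_poly hg (ε := min (min ε₁ ε₂) (min |(g 1).re| |(g (-1)).re|))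
      (by positivity)
    have hr : ∀ c : ℂ, ‖c‖ ≤ 1 → Polynomial.aeval c p = 0 → f c ≠ 0 := fun c hc => 
      H2 _ (isRDisc_poly p) (fun z hz => (hp z hz).trans_le
        ((min_le_left _ _).trans (min_le_right _ _))) c (by simpa using hc)
    refine (H1 _ (isRDisc_poly p) (fun z hz => (hp z hz).trans_le
      ((min_le_left _ _).trans (min_le_left _ _)))).1 ?_
    refine caseB hf h0 he hfe hA.1 hA.2 p (nz p hr (Or.inl hA.1)) hr ?_
    have a1 := poly_sign (p := p) (w := g 1) (s := 1) (by
      simpa using (hp 1 one_mem).trans_le ((min_le_right _ _).trans (min_le_left _ _)))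
    have a2 := poly_sign (p := p) (w := g (-1)) (s := -1) (by
      simpa using (hp (-1) mone_mem).trans_le ((min_le_right _ _).trans (min_le_right _ _)))
    have := mul_pos a1 a2
    have e : p.eval 1 * (g 1).re * (p.eval (-1) * (g (-1)).re)
      = (p.eval 1 * p.eval (-1)) * ((g 1).re * (g (-1)).re) := by ring
    rw [e] at this
    exact pos_of_mul_pos_left this hs.le

lemma no_interior_zero {f : ℂ → ℂ} (hf : IsRDisc f) (x : ℕ → ℝ)
    (hx : Filter.Tendsto x Filter.atTop (nhds 0))
    (hmiss : ∀ n : ℕ, ((x n : ℂ)) ∉ f '' closedBall (0 : ℂ) 1) :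
    (∀ z ∈ closedBall (0 : ℂ) 1, f z = 0) ∨ (∀ z ∈ ball (0 : ℂ) 1, f z ≠ 0) := by
  by_contra! hcon
  obtain ⟨⟨z₁, hz₁, hne⟩, z₀, hz₀, hz⟩ := hcon
  have han : AnalyticOnNhd ℂ f (ball (0 : ℂ) 1) := hf.2.1.analyticOnNhd isOpen_ball
  rcases (han z₀ hz₀).eventually_constant_or_nhds_le_map_nhds with h | h
  · have h1 := han.eqOn_of_preconnected_of_eventuallyEq (g := fun _ => 0) analyticOnNhd_const
      (convex_ball _ _).isPreconnected hz₀ (by rw [hz] at h; exact h)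
    have h2 := h1.of_subset_closure hf.1 continuousOn_const ball_subset_closedBall
      (by rw [closure_ball _ one_ne_zero])
    exact hne (h2 hz₁)
  · rw [hz] at h
    have him : f '' ball (0 : ℂ) 1 ∈ nhds (0 : ℂ) :=
      h (Filter.image_mem_map (isOpen_ball.mem_nhds hz₀))
    have hx' : Filter.Tendsto (fun n => (x n : ℂ)) Filter.atTop (nhds 0) := by
      have := (Complex.continuous_ofReal.tendsto 0).comp hx
      rw [Complex.ofReal_zero] at this
      exact this
    obtain ⟨n, hn⟩ := (hx'.eventually him).exists
    exact hmiss n (Set.image_mono ball_subset_closedBall hn)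

theorem totally_reducible_of_omitted_real_values (f : ℂ → ℂ) (hf : IsRDisc f)
    (x : ℕ → ℝ) (hx : Filter.Tendsto x Filter.atTop (nhds 0))
    (hmiss : ∀ n : ℕ, ((x n : ℂ)) ∉ f '' closedBall (0 : ℂ) 1)
    (g : ℂ → ℂ) (hg : IsRDisc g) (hinv : BezoutPair f g)
    (hsign : ConstSignOnRealZeros g f) :
    ∃ u v : ℂ → ℂ, IsRDiscUnit u ∧ IsRDiscUnit v ∧
      ∀ z ∈ closedBall (0 : ℂ) 1, u z * f z + v z * g z = 1 := by
  have hfx : ∀ n, IsRDiscUnit (fun z => ((x n : ℝ) : ℂ) - f z) := fun n =>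
    ⟨(isRDisc_const _).sub hf, fun z hz h => hmiss n ⟨z, hz, (sub_eq_zero.1 h).symm⟩⟩
  rcases no_interior_zero hf x hx hmiss with h | h0
  · obtain ⟨α, β, hα, hβ, hab⟩ := hinv
    have hgu : IsRDiscUnit g := ⟨hg, fun z hz h1 => by
      have := hab z hz
      rw [h z hz, h1] at this
      simp at this⟩
    refine ⟨_, _, ⟨isRDisc_one, by simp⟩, IsRDiscUnit.div ⟨isRDisc_one, by simp⟩ hgu,
      fun z hz => ?_⟩
    have := hgu.2 z hz
    simp [h z hz, this]
  by_cases hfu : ∃ n, x n = 0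
  · obtain ⟨n, hn⟩ := hfu
    have hfu : IsRDiscUnit f := ⟨hf, fun z hz h => hmiss n ⟨z, hz, by simp [h, hn]⟩⟩
    obtain ⟨C, hC, hgC⟩ := hg.bound
    have hδ : (0 : ℝ) < 1 / (2 * C) := by positivity
    have hv : IsRDiscUnit (fun _ => ((1 / (2 * C) : ℝ) : ℂ)) :=
      ⟨isRDisc_const _, fun z _ => by
        rw [Complex.ofReal_ne_zero]; exact hδ.ne'⟩
    have hnum : IsRDiscUnit (fun z => 1 + ((-(1 / (2 * C)) : ℝ) : ℂ) * g z) := by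
      refine unit_one_add ((isRDisc_const _).mul hg) fun z hz => ?_
      rw [norm_mul, Complex.norm_real, norm_neg, Real.norm_of_nonneg hδ.le]
      calc _ ≤ 1 / (2 * C) * C := by gcongr; exact hgC z hz
        _ = 1 / 2 := by field_simp
        _ < 1 := by norm_num
    refine ⟨_, _, hnum.div hfu, hv, fun z hz => ?_⟩
    rw [div_mul_cancel₀ _ (hfu.2 z hz)]
    push_cast
    ring
  push Not at hfu
  obtain ⟨w, k, hw, hk, hwk⟩ := RR.main hf hg hinv hsign h0
  have hh : IsRDisc (fun z => k z / w z) := hk.div hw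
  obtain ⟨C, hC, hhC⟩ := hh.bound
  obtain ⟨n, hn⟩ := (hx.eventually (Metric.ball_mem_nhds 0 (show 0 < 1 / C by positivity))).exists
  rw [dist_zero_right] at hn
  have hu1 : IsRDiscUnit (fun z => 1 + ((-(x n) : ℝ) : ℂ) * (k z / w z)) := by
    refine unit_one_add ((isRDisc_const _).mul hh) fun z hz => ?_
    rw [norm_mul, Complex.norm_real, norm_neg]
    calc _ ≤ ‖x n‖ * C := by gcongr; exact hhC z hz
      _ < 1 / C * C := by gcongr
      _ = 1 := by field_simp
  have hm1 : IsRDiscUnit (fun _ => ((-1 : ℝ) : ℂ)) := ⟨isRDisc_const _, by simp⟩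
  have hxn : IsRDiscUnit (fun _ => ((x n : ℝ) : ℂ)) :=
    ⟨isRDisc_const _, fun z _ => by simpa using hfu n⟩
  refine ⟨_, _, (hm1.mul hu1).div (hfx n), hxn.div (hw.mul (hfx n)), fun z hz => ?_⟩
  have e1 := hw.2 z hz
  have e2 := (hfx n).2 z hz
  have e3 := hwk z hz
  simp only at e2 ⊢
  rw [div_mul_eq_mul_div, div_mul_eq_mul_div, div_add_div _ _ e2 (mul_ne_zero e1 e2),
    div_eq_one_iff_eq (mul_ne_zero e2 (mul_ne_zero e1 e2))]
  have e4 : k z / w z * w z = k z := div_mul_cancel₀ _ e1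
  push_cast
  linear_combination ((x n : ℂ) - f z) * (x n : ℂ) * e3 + ((x n : ℂ) - f z) * (x n : ℂ) * f z * e4
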